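/- Let X and Y be pure simplicial complexes such that sd X and sd Y are star decomposable in vertices (i.e. the pairs (sd X, V(X)) and (sd Y, V(Y)) are star decomposable in vertices). Let ≺ be a total order on V(X) ⊔ V(Y) such that: (i) the restriction of ≺ to V(X) induces a star decomposition of (sd X, V(X)) in vertices; (ii) the restriction of ≺ to V(Y) induces a star decomposition of (sd Y, V(Y)) in vertices; (iii) if V(X) ≠ ∅ and V(Y) ≠ ∅, then the two ≺-largest elements of V(X) ⊔ V(Y) are the ≺-largest element of V(X) and the ≺-largest element of V(Y) (in either order). Then ≺ induces a star decomposition of (sd(X * Y), V(X) ⊔ V(Y)) in vertices; in particular sd(X * Y) is star decomposable in vertices. -/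

import Mathlib

/-! Common definitions: finite abstract simplicial complexes, links, stars,
barycentric subdivision, joins, collapsibility, shellability, vertex
decomposability, star decomposability (also "in vertices"), and simplicial
homology (reduced, over ℤ and ℤ₂). -/

namespace Paper

open Finset

variable {V : Type*} [DecidableEq V]

/-- `K` is a (finite, abstract) simplicial complex: downward closed family of finsets. -/
def IsCplx (K : Finset (Finset V)) : Prop :=
  ∀ σ ∈ K, ∀ τ ⊆ σ, τ ∈ K

/-- Vertex set of a complex. -/
def verts (K : Finset (Finset V)) : Finset V := K.sup id

/-- Dimension of a complex (as an integer; `-1` for `∅` and `{∅}`). -/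
def dim (K : Finset (Finset V)) : ℤ := ((K.sup Finset.card : ℕ) : ℤ) - 1

/-- The facets (inclusion-maximal faces) of `K`. -/
def facets (K : Finset (Finset V)) : Finset (Finset V) :=
  K.filter fun σ => ∀ τ ∈ K, σ ⊆ τ → σ = τ

/-- `K` is pure `d`-dimensional: it is nonempty, every face has dimension at most `d`
and every face is contained in a face of dimension exactly `d`. -/
def PureDim (K : Finset (Finset V)) (d : ℤ) : Prop :=
  K.Nonempty ∧ (∀ σ ∈ K, (σ.card : ℤ) ≤ d + 1) ∧
    ∀ σ ∈ K, ∃ τ ∈ K, σ ⊆ τ ∧ (τ.card : ℤ) = d + 1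

/-- Link of a face. -/
def lk (σ : Finset V) (K : Finset (Finset V)) : Finset (Finset V) :=
  (K.filter fun τ => σ ⊆ τ).image fun τ => τ \ σ

/-- Closed star of a face. -/
def star (σ : Finset V) (K : Finset (Finset V)) : Finset (Finset V) :=
  K.filter fun τ => τ ∪ σ ∈ K

/-- Union of the closed stars of a set of vertices. -/
def starSet (S : Finset V) (K : Finset (Finset V)) : Finset (Finset V) :=
  K.filter fun τ => ∃ v ∈ S, τ ∪ {v} ∈ K

/-- Subcomplex induced on a vertex set `S`. -/
def induced (S : Finset V) (K : Finset (Finset V)) : Finset (Finset V) :=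
  K.filter fun σ => σ ⊆ S

/-- Deletion of a vertex:  `K - v`. -/
def deleteV (v : V) (K : Finset (Finset V)) : Finset (Finset V) :=
  K.filter fun σ => v ∉ σ

/-- The full simplex on vertex set `σ`. -/
def simplexCplx (σ : Finset V) : Finset (Finset V) := σ.powerset

/-- The boundary `∂σ` of the simplex on `σ`: all proper subsets of `σ`. -/
def bdSimplex (σ : Finset V) : Finset (Finset V) := σ.powerset.erase σ

/-- Barycentric subdivision: vertices are the nonempty faces of `K`, faces are
chains of nonempty faces of `K`. -/
def sd (K : Finset (Finset V)) : Finset (Finset (Finset V)) :=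
  if K = ∅ then ∅ else
    K.powerset.filter fun c => (∅ ∉ c) ∧ ∀ σ ∈ c, ∀ τ ∈ c, σ ⊆ τ ∨ τ ⊆ σ

/-- Join of two simplicial complexes (on the disjoint union of vertex types). -/
def join {α β : Type*} [DecidableEq α] [DecidableEq β]
    (X : Finset (Finset α)) (Y : Finset (Finset β)) : Finset (Finset (α ⊕ β)) :=
  (X ×ˢ Y).image fun p => p.1.image Sum.inl ∪ p.2.image Sum.inr

/-- `K'` arises from `K` by an elementary collapse: remove a free face `σ`
together with the unique face `τ` properly containing it. -/
def ElemCollapse (K K' : Finset (Finset V)) : Prop :=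
  ∃ σ ∈ K, ∃ τ ∈ K, σ ⊂ τ ∧ (∀ ρ ∈ K, σ ⊂ ρ → ρ = τ) ∧ K' = (K.erase σ).erase τ

/-- `K` collapses to `K'`. -/
def CollapsesTo (K K' : Finset (Finset V)) : Prop :=
  Relation.ReflTransGen ElemCollapse K K'

/-- `K` is collapsible: it collapses to a single vertex. -/
def Collapsible (K : Finset (Finset V)) : Prop :=
  ∃ w : V, CollapsesTo K ({∅, {w}} : Finset (Finset V))

/-- The removal-collapsibility condition: `K` is empty, or becomes collapsible
after removal of a set of facets. -/
def RC (K : Finset (Finset V)) : Prop :=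
  K = ∅ ∨ ∃ F ⊆ facets K, Collapsible (K \ F)

/-- The hereditary removal-collapsibility condition: the link of every face
(including the empty face, whose link is `K` itself) satisfies (RC). -/
def HRC (K : Finset (Finset V)) : Prop :=
  ∀ σ ∈ K, RC (lk σ K)

/-- `K` is shellable: there is a total order of its facets such that each facet
meets the union of the previous ones in a pure complex of codimension one. -/
def Shellable (K : Finset (Finset V)) : Prop :=
  ∃ L : List (Finset V), L.Nodup ∧ L.toFinset = facets K ∧
    ∀ i : ℕ, (hi : i < L.length) → 1 ≤ i →
      PureDim ((L.get ⟨i, hi⟩).powerset ∩ ((L.take i).map Finset.powerset).foldr (· ∪ ·) ∅)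
        (((L.get ⟨i, hi⟩).card : ℤ) - 2)

/-- Vertex decomposability (Provan–Billera) of a pure complex. -/
inductive VD : Finset (Finset V) → Prop
  | simplex (σ : Finset V) : VD σ.powerset
  | shed (K : Finset (Finset V)) (v : V) (hv : {v} ∈ K)
      (hdel : PureDim (deleteV v K) (dim K)) (hVDdel : VD (deleteV v K))
      (hlk : PureDim (lk {v} K) (dim K - 1)) (hVDlk : VD (lk {v} K)) : VD K

/-- `L` is a shedding order of `K` (a total order on `V(K)`, given as a
duplicate-free list, witnessing vertex decomposability; once a simplex is
reached, an arbitrary order of its vertices qualifies). -/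
inductive SheddingOrder : List V → Finset (Finset V) → Prop
  | simplex (σ : Finset V) (L : List V) (hnd : L.Nodup) (hfin : L.toFinset = σ) :
      SheddingOrder L σ.powerset
  | cons (v : V) (L : List V) (K : Finset (Finset V)) (hv : {v} ∈ K) (hvL : v ∉ L)
      (hcov : insert v L.toFinset = verts K)
      (hdel : PureDim (deleteV v K) (dim K))
      (hrest : SheddingOrder L (deleteV v K))
      (hlk : PureDim (lk {v} K) (dim K - 1)) (hVDlk : VD (lk {v} K)) :
      SheddingOrder (v :: L) K

/-- `W` induces a star partition of `X`: the stars of the vertices of `W`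
cover `X` and no two distinct vertices of `W` lie in a common face. -/
def StarPartition (W : Finset V) (X : Finset (Finset V)) : Prop :=
  (∀ σ ∈ X, ∃ w ∈ W, σ ∪ {w} ∈ X) ∧
    ∀ w₁ ∈ W, ∀ w₂ ∈ W, w₁ ≠ w₂ → ¬∃ σ ∈ X, w₁ ∈ σ ∧ w₂ ∈ σ

/-- The overlap `O_X(x, W') = lk(x,X) ∩ st(W',X)`. -/
def overlap (X : Finset (Finset V)) (x : V) (W' : Finset V) : Finset (Finset V) :=
  lk {x} X ∩ starSet W' X

/-- Star decomposability of the pair `(X, X₀)`.  The total order on the set `W`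
inducing the star partition is encoded as a duplicate-free list `L` (earlier in
the list = smaller in the order). -/
inductive StarDec : Finset (Finset V) → Finset V → Prop
  | base : StarDec ({∅} : Finset (Finset V)) (∅ : Finset V)
  | step (X : Finset (Finset V)) (X₀ : Finset V) (k : ℤ) (hk : 0 ≤ k) (hpure : PureDim X k)
      (L : List V) (hne : L ≠ []) (hnd : L.Nodup) (hsub : L.toFinset ⊆ verts X)
      (hsp : StarPartition L.toFinset X)
      (horder : ∃ i < L.length, X₀ = (L.drop i).toFinset)
      (U : ℕ → Finset V)
      (hUne : ∀ i, i + 1 < L.length → (U i).Nonempty)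
      (hUsub : ∀ i, (hi : i + 1 < L.length) →
        U i ⊆ verts (lk {L.get ⟨i, Nat.lt_of_succ_lt hi⟩} X))
      (hUst : ∀ i, (hi : i + 1 < L.length) →
        starSet (U i) (lk {L.get ⟨i, Nat.lt_of_succ_lt hi⟩} X) =
          overlap X (L.get ⟨i, Nat.lt_of_succ_lt hi⟩) ((L.drop (i + 1)).toFinset))
      (hlink : ∀ i, (hi : i + 1 < L.length) →
        StarDec (lk {L.get ⟨i, Nat.lt_of_succ_lt hi⟩} X) (U i))
      (Ulast : Finset V)
      (hlast : StarDec (lk {L.getLast hne} X) Ulast) :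
      StarDec X X₀

/-- The order encoded by the list `L` induces a star decomposition of `(X, X₀)`. -/
def InducesStarDecomp (L : List V) (X : Finset (Finset V)) (X₀ : Finset V) : Prop :=
  (L = [] ∧ X = ({∅} : Finset (Finset V)) ∧ X₀ = ∅) ∨
  ∃ hne : L ≠ [], L.Nodup ∧ StarPartition L.toFinset X ∧
    (∃ i < L.length, X₀ = (L.drop i).toFinset) ∧
    (∀ i, (hi : i + 1 < L.length) →
      ∃ U : Finset V, U.Nonempty ∧ U ⊆ verts (lk {L.get ⟨i, Nat.lt_of_succ_lt hi⟩} X) ∧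
        starSet U (lk {L.get ⟨i, Nat.lt_of_succ_lt hi⟩} X) =
          overlap X (L.get ⟨i, Nat.lt_of_succ_lt hi⟩) ((L.drop (i + 1)).toFinset) ∧
        StarDec (lk {L.get ⟨i, Nat.lt_of_succ_lt hi⟩} X) U) ∧
    (∃ U : Finset V, StarDec (lk {L.getLast hne} X) U)

/-- Star decomposability *in vertices* of the pair `(sd Y, Y₀)`; the data is the
underlying complex `Y` together with `Y₀ ⊆ V(Y)`.  The total order on `V(Y)` is
encoded as a duplicate-free list `L`. -/
inductive StarDecV : Finset (Finset V) → Finset V → Prop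
  | base : StarDecV ({∅} : Finset (Finset V)) (∅ : Finset V)
  | step (Y : Finset (Finset V)) (Y₀ : Finset V) (k : ℤ) (hk : 0 ≤ k) (hpure : PureDim Y k)
      (L : List V) (hne : L ≠ []) (hnd : L.Nodup) (hV : L.toFinset = verts Y)
      (horder : ∃ i < L.length, Y₀ = (L.drop i).toFinset)
      (hlink : ∀ i, (hi : i + 1 < L.length) →
        StarDecV (lk {L.get ⟨i, Nat.lt_of_succ_lt hi⟩} Y)
          (verts (lk {L.get ⟨i, Nat.lt_of_succ_lt hi⟩} Y) ∩ (L.drop (i + 1)).toFinset))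
      (hlast : StarDecV (lk {L.getLast hne} Y) (verts (lk {L.getLast hne} Y))) :
      StarDecV Y Y₀

/-- The order encoded by the list `L` induces a star decomposition of
`(sd Y, Y₀)` in vertices. -/
def InducesStarDecompV (L : List V) (Y : Finset (Finset V)) (Y₀ : Finset V) : Prop :=
  (L = [] ∧ Y = ({∅} : Finset (Finset V)) ∧ Y₀ = ∅) ∨
  ∃ hne : L ≠ [], L.Nodup ∧ L.toFinset = verts Y ∧
    (∃ i < L.length, Y₀ = (L.drop i).toFinset) ∧
    (∀ i, (hi : i + 1 < L.length) →
      StarDecV (lk {L.get ⟨i, Nat.lt_of_succ_lt hi⟩} Y)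
        (verts (lk {L.get ⟨i, Nat.lt_of_succ_lt hi⟩} Y) ∩ (L.drop (i + 1)).toFinset)) ∧
    StarDecV (lk {L.getLast hne} Y) (verts (lk {L.getLast hne} Y))

/-- Simplicial isomorphism between two complexes. -/
def SimpIso {α β : Type*} [DecidableEq α] [DecidableEq β]
    (K : Finset (Finset α)) (L : Finset (Finset β)) : Prop :=
  ∃ f : α → β, Set.InjOn f ↑(verts K) ∧ K.image (fun σ => σ.image f) = L

/-- Simplicial isomorphism of pairs (complex, subcomplex). -/
def SimpIsoPair {α β : Type*} [DecidableEq α] [DecidableEq β]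
    (K K₁ : Finset (Finset α)) (L L₁ : Finset (Finset β)) : Prop :=
  ∃ f : α → β, Set.InjOn f ↑(verts K) ∧ K.image (fun σ => σ.image f) = L ∧
    K₁.image (fun σ => σ.image f) = L₁

/-! Reduced simplicial homology (the empty face is included, so the chain
complex below, graded by cardinality of faces, computes *reduced* homology). -/

/-- Faces of `K` of cardinality `n`. -/
def kfaces (K : Finset (Finset V)) (n : ℕ) : Finset (Finset V) :=
  K.filter fun σ => σ.card = n

/-- The mod 2 boundary operator, from chains on faces of cardinality `n+1`
to chains on faces of cardinality `n`. -/
noncomputable def bdry2 (K : Finset (Finset V)) (n : ℕ) :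
    (↥(kfaces K (n + 1)) → ZMod 2) →ₗ[ZMod 2] (↥(kfaces K n) → ZMod 2) :=
  Matrix.mulVecLin (Matrix.of fun (τ : ↥(kfaces K n)) (σ : ↥(kfaces K (n + 1))) =>
    if (τ : Finset V) ⊆ (σ : Finset V) then (1 : ZMod 2) else 0)

/-- The reduced Betti number `β̃ᵢ(K; ℤ₂)`. -/
noncomputable def betti2 (K : Finset (Finset V)) (i : ℕ) : ℕ :=
  Module.finrank (ZMod 2) (LinearMap.ker (bdry2 K i)) -
    Module.finrank (ZMod 2) (LinearMap.range (bdry2 K (i + 1)))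

/-- Signed incidence coefficient (with respect to an arbitrary, but fixed,
linear order on the vertices; reduced homology does not depend on the choice). -/
noncomputable def coeffInt (σ τ : Finset V) : ℤ :=
  letI : LinearOrder V := IsWellOrder.linearOrder WellOrderingRel
  (σ \ τ).sum fun v => (-1 : ℤ) ^ ((σ.filter fun u => u < v).card)

/-- The integral boundary operator, from chains on faces of cardinality `n+1`
to chains on faces of cardinality `n`. -/
noncomputable def bdryZ (K : Finset (Finset V)) (n : ℕ) :
    (↥(kfaces K (n + 1)) → ℤ) →ₗ[ℤ] (↥(kfaces K n) → ℤ) :=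
  Matrix.mulVecLin (Matrix.of fun (τ : ↥(kfaces K n)) (σ : ↥(kfaces K (n + 1))) =>
    if (τ : Finset V) ⊆ (σ : Finset V) then coeffInt (σ : Finset V) (τ : Finset V) else 0)

/-- `K` has trivial reduced (integral) homology: `H̃ₙ(K; ℤ) = 0` for all
`n ≥ -1`. -/
def TrivialRedHomology (K : Finset (Finset V)) : Prop :=
  K.Nonempty ∧ LinearMap.range (bdryZ K 0) = ⊤ ∧
    ∀ n : ℕ, LinearMap.ker (bdryZ K n) = LinearMap.range (bdryZ K (n + 1))

/-- Reduced Euler characteristic. -/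
def redEuler (K : Finset (Finset V)) : ℤ :=
  (∑ σ ∈ K.filter fun σ => σ ≠ ∅, (-1 : ℤ) ^ (σ.card - 1)) - 1


/-!
The link of `a ∈ V(X)` in `X * Y` is `lk(a, X) * Y`, which has fewer vertices, so one argues by
induction. The vertices of this link that lie above `a` (all of them, if `a` is the last vertex)
are the union of a part in `V(lk(a, X))` and a part in `V(Y)`, and each part is a final segment of
an order inducing a star decomposition of its factor. By induction, every merge of these two orders
that satisfies (iii) induces a star decomposition of the link, and it remains to choose a merge in
which the two parts together form a final segment. If both parts are nonempty, let them come last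
and end with the last elements of the two orders. If exactly one is empty although its order is
not, then by (iii) for the given order the other is the single last vertex of `Y`, and that vertex
goes last, right after the last vertex of `lk(a, X)`.
-/

section ListSum

variable {α β γ : Type*}

/-- The restriction to `α` of the order encoded by the list `L` on `α ⊕ β`. -/
def lefts (L : List (α ⊕ β)) : List α := L.filterMap Sum.getLeft?

/-- The restriction to `β` of the order encoded by the list `L` on `α ⊕ β`. -/
def rights (L : List (α ⊕ β)) : List β := L.filterMap Sum.getRight?

@[simp]
theorem lefts_append (L M : List (α ⊕ β)) : lefts (L ++ M) = lefts L ++ lefts M :=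
  List.filterMap_append

@[simp]
theorem rights_append (L M : List (α ⊕ β)) : rights (L ++ M) = rights L ++ rights M :=
  List.filterMap_append

@[simp]
theorem lefts_nil : lefts ([] : List (α ⊕ β)) = [] := rfl

@[simp]
theorem rights_nil : rights ([] : List (α ⊕ β)) = [] := rfl

@[simp]
theorem lefts_cons_inl (a : α) (L : List (α ⊕ β)) : lefts (Sum.inl a :: L) = a :: lefts L := rfl

@[simp]
theorem lefts_cons_inr (b : β) (L : List (α ⊕ β)) : lefts (Sum.inr b :: L) = lefts L := rfl

@[simp]
theorem rights_cons_inl (a : α) (L : List (α ⊕ β)) : rights (Sum.inl a :: L) = rights L := rfl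

@[simp]
theorem rights_cons_inr (b : β) (L : List (α ⊕ β)) : rights (Sum.inr b :: L) = b :: rights L := rfl

@[simp]
theorem lefts_map_inl (l : List α) : lefts (l.map Sum.inl : List (α ⊕ β)) = l := by
  induction l <;> simp_all

@[simp]
theorem lefts_map_inr (l : List β) : lefts (l.map Sum.inr : List (α ⊕ β)) = [] := by
  induction l <;> simp_all

@[simp]
theorem rights_map_inl (l : List α) : rights (l.map Sum.inl : List (α ⊕ β)) = [] := by
  induction l <;> simp_all

@[simp]
theorem rights_map_inr (l : List β) : rights (l.map Sum.inr : List (α ⊕ β)) = l := by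
  induction l <;> simp_all

@[simp]
theorem mem_lefts {L : List (α ⊕ β)} {a : α} : a ∈ lefts L ↔ Sum.inl a ∈ L := by
  simp [lefts]

@[simp]
theorem mem_rights {L : List (α ⊕ β)} {b : β} : b ∈ rights L ↔ Sum.inr b ∈ L := by
  simp [rights]

theorem lefts_suffix {B L : List (α ⊕ β)} (h : B <:+ L) : lefts B <:+ lefts L :=
  h.filterMap _

theorem rights_suffix {B L : List (α ⊕ β)} (h : B <:+ L) : rights B <:+ rights L :=
  h.filterMap _

theorem nodup_of_lefts_of_rights {L : List (α ⊕ β)} (hl : (lefts L).Nodup)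
    (hr : (rights L).Nodup) : L.Nodup := by
  induction L with
  | nil => exact List.nodup_nil
  | cons z L ih => cases z <;> simp_all

theorem toLeft_toFinset [DecidableEq α] [DecidableEq β] (L : List (α ⊕ β)) :
    L.toFinset.toLeft = (lefts L).toFinset := by
  ext; simp

theorem toRight_toFinset [DecidableEq α] [DecidableEq β] (L : List (α ⊕ β)) :
    L.toFinset.toRight = (rights L).toFinset := by
  ext; simp

theorem forall_cons_suffix_iff {L : List γ} {P : γ → List γ → Prop} :
    (∀ w B, w :: B <:+ L → P w B) ↔ ∀ i (hi : i < L.length), P L[i] (L.drop (i + 1)) := by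
  constructor
  · intro h i hi
    exact h _ _ (List.drop_eq_getElem_cons hi ▸ List.drop_suffix i L)
  · rintro h w B ⟨A, rfl⟩
    simpa using h A.length (by simp)

/-- `B` is a set of the form `W_{⪰ w'}` for the order on `W` encoded by `L`, or `W = ∅`. -/
def IsFinalSegment (B L : List γ) : Prop :=
  B <:+ L ∧ (B = [] → L = [])

theorem isFinalSegment_iff_drop {L B : List γ} (hL : L ≠ []) :
    IsFinalSegment B L ↔ ∃ i < L.length, B = L.drop i := by
  constructor
  · rintro ⟨⟨A, rfl⟩, hB⟩
    exact ⟨A.length, by simpa [List.length_pos_iff] using mt hB hL, by simp⟩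
  · rintro ⟨i, hi, rfl⟩
    exact ⟨List.drop_suffix i L, fun h => by simp at h; omega⟩

/-- Condition (iii) on the order on `α ⊕ β` encoded by `L`: if both sides occur, then
the two largest elements lie on different sides. -/
def EndsMixed (L : List (α ⊕ β)) : Prop :=
  lefts L ≠ [] → rights L ≠ [] →
    ∃ B, B <:+ L ∧ B.length = 2 ∧ lefts B ≠ [] ∧ rights B ≠ []

theorem EndsMixed.mixed_of_suffix {L B : List (α ⊕ β)} (hL : EndsMixed L) (hl : lefts L ≠ [])
    (hr : rights L ≠ []) (hB : B <:+ L) (hlen : 2 ≤ B.length) : lefts B ≠ [] ∧ rights B ≠ [] := by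
  obtain ⟨C, hCL, hClen, hCl, hCr⟩ := hL hl hr
  have hCB : C <:+ B := List.suffix_of_suffix_length_le hCL hB (by omega)
  exact ⟨fun h => hCl (List.suffix_nil.1 (h ▸ lefts_suffix hCB)),
    fun h => hCr (List.suffix_nil.1 (h ▸ rights_suffix hCB))⟩

theorem EndsMixed.tail_of_lefts_eq_nil {L B : List (α ⊕ β)} {z : α ⊕ β} (hL : EndsMixed L)
    (h : z :: B <:+ L) (hB : lefts B = []) :
    B = [] ∨ lefts L = [] ∨ (∃ a, z = Sum.inl a) ∧ ∃ b, B = [Sum.inr b] := by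
  have hBL : B <:+ L := (List.suffix_cons z B).trans h
  rcases B with - | ⟨a | b, B⟩
  · exact .inl rfl
  · simp at hB
  refine .inr (or_iff_not_imp_left.2 fun hl => ?_)
  have hr : rights L ≠ [] := List.ne_nil_of_mem (mem_rights.2 (hBL.subset List.mem_cons_self))
  obtain rfl : B = [] := by
    by_contra hne
    have hlen : 2 ≤ (Sum.inr b :: B).length := by simpa [Nat.one_le_iff_ne_zero] using hne
    exact (hL.mixed_of_suffix hl hr hBL hlen).1 hB
  rcases z with a | b'
  · exact ⟨⟨a, rfl⟩, b, rfl⟩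
  · exact absurd rfl (hL.mixed_of_suffix hl hr h le_rfl).1

theorem EndsMixed.tail_of_rights_eq_nil {L B : List (α ⊕ β)} {z : α ⊕ β} (hL : EndsMixed L)
    (h : z :: B <:+ L) (hB : rights B = []) :
    B = [] ∨ rights L = [] ∨ (∃ b, z = Sum.inr b) ∧ ∃ a, B = [Sum.inl a] := by
  have hBL : B <:+ L := (List.suffix_cons z B).trans h
  rcases B with - | ⟨a | b, B⟩
  · exact .inl rfl
  swap
  · simp at hB
  refine .inr (or_iff_not_imp_left.2 fun hr => ?_)
  have hl : lefts L ≠ [] := List.ne_nil_of_mem (mem_lefts.2 (hBL.subset List.mem_cons_self))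
  obtain rfl : B = [] := by
    by_contra hne
    have hlen : 2 ≤ (Sum.inl a :: B).length := by simpa [Nat.one_le_iff_ne_zero] using hne
    exact (hL.mixed_of_suffix hl hr hBL hlen).2 hB
  rcases z with a' | b
  · exact absurd rfl (hL.mixed_of_suffix hl hr h le_rfl).2
  · exact ⟨⟨b, rfl⟩, a, rfl⟩

theorem exists_endsMixed_inr_suffix (l₁ : List α) {l₂ : List β} {b : β} (h : [b] <:+ l₂) :
    ∃ L, lefts L = l₁ ∧ rights L = l₂ ∧ EndsMixed L ∧ [Sum.inr b] <:+ L := by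
  obtain ⟨l, rfl⟩ := h
  refine ⟨l.map Sum.inr ++ l₁.map Sum.inl ++ [Sum.inr b], by simp, by simp, ?_,
    List.suffix_append _ _⟩
  intro hl _
  obtain rfl | ⟨m, a, rfl⟩ := l₁.eq_nil_or_concat
  · simp at hl
  · exact ⟨[Sum.inl a, Sum.inr b], ⟨l.map Sum.inr ++ m.map Sum.inl, by simp⟩, by simp⟩

theorem exists_endsMixed_inl_suffix {l₁ : List α} (l₂ : List β) {a : α} (h : [a] <:+ l₁) :
    ∃ L, lefts L = l₁ ∧ rights L = l₂ ∧ EndsMixed L ∧ [Sum.inl a] <:+ L := by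
  obtain ⟨l, rfl⟩ := h
  refine ⟨l.map Sum.inl ++ l₂.map Sum.inr ++ [Sum.inl a], by simp, by simp, ?_,
    List.suffix_append _ _⟩
  intro _ hr
  obtain rfl | ⟨m, b, rfl⟩ := l₂.eq_nil_or_concat
  · simp at hr
  · exact ⟨[Sum.inr b, Sum.inl a], ⟨l.map Sum.inl ++ m.map Sum.inr, by simp⟩, by simp⟩

theorem exists_endsMixed (l₁ : List α) (l₂ : List β) :
    ∃ L, lefts L = l₁ ∧ rights L = l₂ ∧ EndsMixed L := by
  obtain rfl | ⟨m, b, rfl⟩ := l₂.eq_nil_or_concat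
  · exact ⟨l₁.map Sum.inl, by simp, by simp, by simp [EndsMixed]⟩
  · obtain ⟨L, hl, hr, hL, -⟩ := exists_endsMixed_inr_suffix l₁ (m.suffix_append [b])
    exact ⟨L, hl, by simpa using hr, hL⟩

theorem exists_endsMixed_isFinalSegment {B₁ l₁ : List α} {B₂ l₂ : List β}
    (h₁ : IsFinalSegment B₁ l₁) (h₂ : IsFinalSegment B₂ l₂) :
    ∃ L B, lefts L = l₁ ∧ rights L = l₂ ∧ EndsMixed L ∧
      IsFinalSegment B L ∧ lefts B = B₁ ∧ rights B = B₂ := by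
  obtain ⟨⟨A₁, rfl⟩, h₁⟩ := h₁
  obtain ⟨⟨A₂, rfl⟩, h₂⟩ := h₂
  obtain ⟨B, rfl, rfl, hB⟩ := exists_endsMixed B₁ B₂
  have hsuf : B <:+ A₁.map Sum.inl ++ A₂.map Sum.inr ++ B := List.suffix_append _ _
  refine ⟨_, B, by simp, by simp, ?_, ⟨hsuf, ?_⟩, rfl, rfl⟩
  · intro hl hr
    obtain ⟨C, hC, hmixed⟩ :=
      hB (fun h => hl (by simpa using h₁ h)) (fun h => hr (by simpa using h₂ h))
    exact ⟨C, hC.trans hsuf, hmixed⟩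
  · rintro rfl
    simp_all

end ListSum

section Complexes

variable {α β : Type*} [DecidableEq α] [DecidableEq β] {X : Finset (Finset α)}
  {Y : Finset (Finset β)}

theorem mem_verts {K : Finset (Finset V)} {v : V} : v ∈ verts K ↔ ∃ σ ∈ K, v ∈ σ := by
  simp [verts]

theorem mem_lk_singleton {K : Finset (Finset V)} {v : V} {ρ : Finset V} :
    ρ ∈ lk {v} K ↔ v ∉ ρ ∧ insert v ρ ∈ K := by
  simp only [lk, mem_image, mem_filter, singleton_subset_iff, sdiff_singleton_eq_erase]
  constructor
  · rintro ⟨σ, ⟨hσ, hv⟩, rfl⟩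
    exact ⟨notMem_erase v σ, by rwa [insert_erase hv]⟩
  · rintro ⟨hv, hρ⟩
    exact ⟨insert v ρ, ⟨hρ, mem_insert_self v ρ⟩, erase_insert hv⟩

theorem eq_singleton_empty_of_verts_eq_empty {K : Finset (Finset V)} (hK : K.Nonempty)
    (h : verts K = ∅) : K = {∅} :=
  eq_singleton_iff_nonempty_unique_mem.2
    ⟨hK, fun _ hσ => subset_empty.1 (h ▸ le_sup (f := id) hσ)⟩

theorem card_verts_lk_lt {K : Finset (Finset V)} {v : V} (hv : v ∈ verts K) :
    #(verts (lk {v} K)) < #(verts K) := by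
  refine card_lt_card ((ssubset_iff_of_subset fun w hw => ?_).2 ⟨v, hv, fun hw => ?_⟩) <;>
    obtain ⟨ρ, hρ, hwρ⟩ := mem_verts.1 hw
  · exact mem_verts.2 ⟨_, (mem_lk_singleton.1 hρ).2, mem_insert_of_mem hwρ⟩
  · exact (mem_lk_singleton.1 hρ).1 hwρ

theorem mem_join {ρ : Finset (α ⊕ β)} : ρ ∈ join X Y ↔ ρ.toLeft ∈ X ∧ ρ.toRight ∈ Y := by
  have hface (σ : Finset α) (τ : Finset β) :
      σ.image Sum.inl ∪ τ.image Sum.inr = σ.disjSum τ := by ext (a | b) <;> simp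
  simp only [join, mem_image, mem_product, Prod.exists, hface, disjSum_eq_iff]
  exact ⟨fun ⟨_, _, ⟨hσ, hτ⟩, hl, hr⟩ => ⟨hl ▸ hσ, hr ▸ hτ⟩,
    fun ⟨hl, hr⟩ => ⟨_, _, ⟨hl, hr⟩, rfl, rfl⟩⟩

theorem disjSum_mem_join {σ : Finset α} {τ : Finset β} (hσ : σ ∈ X) (hτ : τ ∈ Y) :
    σ.disjSum τ ∈ join X Y := by
  simpa [mem_join] using ⟨hσ, hτ⟩

theorem lk_join_inl (X : Finset (Finset α)) (Y : Finset (Finset β)) (a : α) :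
    lk {Sum.inl a} (join X Y) = join (lk {a} X) Y := by
  ext ρ; simp [mem_lk_singleton, mem_join, and_assoc]

theorem lk_join_inr (X : Finset (Finset α)) (Y : Finset (Finset β)) (b : β) :
    lk {Sum.inr b} (join X Y) = join X (lk {b} Y) := by
  ext ρ; simp [mem_lk_singleton, mem_join, and_left_comm]

theorem verts_join (hX : X.Nonempty) (hY : Y.Nonempty) :
    verts (join X Y) = (verts X).disjSum (verts Y) := by
  obtain ⟨σ₀, hσ₀⟩ := hX
  obtain ⟨τ₀, hτ₀⟩ := hY
  ext (a | b)
  · simp only [mem_verts, inl_mem_disjSum]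
    exact ⟨fun ⟨ρ, hρ, ha⟩ => ⟨_, (mem_join.1 hρ).1, mem_toLeft.2 ha⟩,
      fun ⟨σ, hσ, ha⟩ => ⟨_, disjSum_mem_join hσ hτ₀, inl_mem_disjSum.2 ha⟩⟩
  · simp only [mem_verts, inr_mem_disjSum]
    exact ⟨fun ⟨ρ, hρ, hb⟩ => ⟨_, (mem_join.1 hρ).2, mem_toRight.2 hb⟩,
      fun ⟨τ, hτ, hb⟩ => ⟨_, disjSum_mem_join hσ₀ hτ, inr_mem_disjSum.2 hb⟩⟩

theorem PureDim.join {c d : ℤ} (hX : PureDim X c) (hY : PureDim Y d) :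
    PureDim (join X Y) (c + d + 1) := by
  obtain ⟨⟨σ₀, hσ₀⟩, hXle, hXfacet⟩ := hX
  obtain ⟨⟨τ₀, hτ₀⟩, hYle, hYfacet⟩ := hY
  refine ⟨⟨_, disjSum_mem_join hσ₀ hτ₀⟩, fun ρ hρ => ?_, fun ρ hρ => ?_⟩ <;>
    obtain ⟨hl, hr⟩ := mem_join.1 hρ
  · have := hXle _ hl
    have := hYle _ hr
    rw [← card_toLeft_add_card_toRight]
    push_cast
    linarith
  · obtain ⟨σ, hσ, hlσ, hσcard⟩ := hXfacet _ hl
    obtain ⟨τ, hτ, hrτ, hτcard⟩ := hYfacet _ hr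
    refine ⟨σ.disjSum τ, disjSum_mem_join hσ hτ, subset_disjSum.2 ⟨hlσ, hrτ⟩, ?_⟩
    rw [card_disjSum]
    push_cast
    linarith

theorem PureDim.nonneg_of_verts_nonempty {K : Finset (Finset V)} {d : ℤ} (hK : PureDim K d)
    (h : (verts K).Nonempty) : 0 ≤ d := by
  obtain ⟨v, hv⟩ := h
  obtain ⟨σ, hσ, hvσ⟩ := mem_verts.1 hv
  have hpos : 0 < #σ := card_pos.2 ⟨v, hvσ⟩
  have hle := hK.2.1 σ hσ
  omega

end Complexes

section StarOrder

variable {K : Finset (Finset V)} {L B : List V} {S : Finset V}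

/-- The vertices of `K` in the final segment `B` of an order; all of `V(K)` if `B = []`.
With this convention `upperVerts (lk {w} K) B`, where `B` lists what lies above `w`, is the
vertex set required by the link condition and by the last vertex condition. -/
def upperVerts (K : Finset (Finset V)) (B : List V) : Finset V :=
  if B = [] then verts K else verts K ∩ B.toFinset

/-- The order encoded by the list `L` induces a star decomposition of `(sd K, V(K))` in
vertices, and `K` is pure. The vertices are indexed by the final segments `w :: B` of `L`
that they start. -/
structure IsStarOrder (L : List V) (K : Finset (Finset V)) : Prop where
  nodup : L.Nodup
  toFinset_eq : L.toFinset = verts K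
  pure : ∃ d, PureDim K d
  link : ∀ w B, w :: B <:+ L → StarDecV (lk {w} K) (upperVerts (lk {w} K) B)

theorem forall_link_iff (hL : L ≠ []) :
    (∀ w B, w :: B <:+ L → StarDecV (lk {w} K) (upperVerts (lk {w} K) B)) ↔
      (∀ i, (hi : i + 1 < L.length) →
        StarDecV (lk {L.get ⟨i, Nat.lt_of_succ_lt hi⟩} K)
          (verts (lk {L.get ⟨i, Nat.lt_of_succ_lt hi⟩} K) ∩ (L.drop (i + 1)).toFinset)) ∧
      StarDecV (lk {L.getLast hL} K) (verts (lk {L.getLast hL} K)) := by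
  have hpos : 0 < L.length := List.length_pos_iff.2 hL
  rw [forall_cons_suffix_iff]
  constructor
  · intro h
    refine ⟨fun i hi => ?_, ?_⟩
    · simpa [upperVerts, hi.not_ge] using h i (by omega)
    · simpa [upperVerts, List.getLast_eq_getElem, Nat.sub_add_cancel hpos] using
        h (L.length - 1) (by omega)
  · rintro ⟨hlink, hlast⟩ i hi
    rcases (Nat.succ_le_of_lt hi).lt_or_eq with hi' | hi'
    · simpa [upperVerts, hi'.not_ge] using hlink i hi'
    · obtain rfl : i = L.length - 1 := by omega
      simpa [upperVerts, List.getLast_eq_getElem, Nat.sub_add_cancel hpos] using hlast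

theorem isStarOrder_nil : IsStarOrder [] ({∅} : Finset (Finset V)) where
  nodup := List.nodup_nil
  toFinset_eq := by simp [verts]
  pure := ⟨-1, by simp [PureDim]⟩
  link := by simp

theorem IsStarOrder.nonempty (h : IsStarOrder L K) : K.Nonempty :=
  h.pure.choose_spec.1

theorem IsStarOrder.mem_verts_iff (h : IsStarOrder L K) {v : V} : v ∈ verts K ↔ v ∈ L := by
  rw [← h.toFinset_eq, List.mem_toFinset]

theorem IsStarOrder.verts_eq_empty_iff (h : IsStarOrder L K) : verts K = ∅ ↔ L = [] := by
  rw [← h.toFinset_eq, List.toFinset_eq_empty_iff]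

theorem IsStarOrder.eq_singleton_empty (h : IsStarOrder [] K) : K = {∅} :=
  eq_singleton_empty_of_verts_eq_empty h.nonempty (h.verts_eq_empty_iff.2 rfl)

theorem isStarOrder_iff_inducesStarDecompV :
    IsStarOrder L K ↔ (∃ d, PureDim K d) ∧ InducesStarDecompV L K (verts K) := by
  constructor
  · intro h
    refine ⟨h.pure, ?_⟩
    by_cases hL : L = []
    · subst hL
      exact .inl ⟨rfl, h.eq_singleton_empty, h.verts_eq_empty_iff.2 rfl⟩
    · exact .inr ⟨hL, h.nodup, h.toFinset_eq,
        ⟨0, List.length_pos_iff.2 hL, h.toFinset_eq.symm⟩, (forall_link_iff hL).1 h.link⟩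
  · rintro ⟨hpure, ⟨rfl, rfl, -⟩ | ⟨hL, hnd, hV, -, hlink⟩⟩
    · exact isStarOrder_nil
    · exact ⟨hnd, hV, hpure, (forall_link_iff hL).2 hlink⟩

theorem starDecV_iff :
    StarDecV K S ↔ ∃ L B, IsStarOrder L K ∧ IsFinalSegment B L ∧ S = B.toFinset := by
  constructor
  · rintro (_ | ⟨_, _, d, _, hpure, L, hL, hnd, hV, ⟨i, hi, rfl⟩, hlink, hlast⟩)
    · exact ⟨[], [], isStarOrder_nil, ⟨List.suffix_rfl, fun _ => rfl⟩, rfl⟩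
    · exact ⟨L, L.drop i, ⟨hnd, hV, ⟨d, hpure⟩, (forall_link_iff hL).2 ⟨hlink, hlast⟩⟩,
        (isFinalSegment_iff_drop hL).2 ⟨i, hi, rfl⟩, rfl⟩
  · rintro ⟨L, B, h, hB, rfl⟩
    by_cases hL : L = []
    · subst hL
      rw [List.suffix_nil.1 hB.1, h.eq_singleton_empty]
      exact StarDecV.base
    · obtain ⟨i, hi, rfl⟩ := (isFinalSegment_iff_drop hL).1 hB
      obtain ⟨d, hd⟩ := h.pure
      have hd0 : 0 ≤ d := hd.nonneg_of_verts_nonempty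
        (nonempty_iff_ne_empty.2 (mt h.verts_eq_empty_iff.1 hL))
      obtain ⟨hlink, hlast⟩ := (forall_link_iff hL).1 h.link
      exact StarDecV.step K _ d hd0 hd L hL h.nodup h.toFinset_eq ⟨i, hi, rfl⟩ hlink hlast

theorem StarDecV.nonempty (h : StarDecV K S) : K.Nonempty := by
  obtain ⟨L, B, hL, -, -⟩ := starDecV_iff.1 h
  exact hL.nonempty

theorem IsStarOrder.starDecV_upperVerts (h : IsStarOrder L K) (hB : B <:+ L) :
    StarDecV K (upperVerts K B) := by
  rw [upperVerts, ← h.toFinset_eq]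
  split_ifs with hnil
  · exact starDecV_iff.2 ⟨L, L, h, ⟨List.suffix_rfl, id⟩, rfl⟩
  · refine starDecV_iff.2 ⟨L, B, h, ⟨hB, fun h => absurd h hnil⟩, inter_eq_right.2 ?_⟩
    exact fun v hv => List.mem_toFinset.2 (hB.subset (List.mem_toFinset.1 hv))

end StarOrder

section Merge

variable {α β : Type*} [DecidableEq α] [DecidableEq β] {X : Finset (Finset α)}
  {Y : Finset (Finset β)} {X₀ : Finset α} {Y₀ : Finset β} {B : List (α ⊕ β)}

theorem upperVerts_join (hX : X.Nonempty) (hY : Y.Nonempty)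
    (hl : lefts B = [] → B = [] ∨ verts X = ∅) (hr : rights B = [] → B = [] ∨ verts Y = ∅) :
    upperVerts (join X Y) B = (upperVerts X (lefts B)).disjSum (upperVerts Y (rights B)) := by
  by_cases hB : B = []
  · simp [hB, upperVerts, verts_join hX hY]
  ext (a | b)
  · by_cases h : lefts B = [] <;> simp_all [upperVerts, verts_join]
  · by_cases h : rights B = [] <;> simp_all [upperVerts, verts_join]

/-- The conclusion of the theorem for the pair `X`, `Y`, as needed for the links in the
induction: every order satisfying (i), (ii) and (iii) induces a star decomposition of the join. -/
def MergesAlongJoin (X : Finset (Finset α)) (Y : Finset (Finset β)) : Prop :=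
  ∀ L, IsStarOrder (lefts L) X → IsStarOrder (rights L) Y → EndsMixed L → IsStarOrder L (join X Y)

theorem MergesAlongJoin.starDecV_disjSum (h : MergesAlongJoin X Y) (hX : StarDecV X X₀)
    (hY : StarDecV Y Y₀) : StarDecV (join X Y) (X₀.disjSum Y₀) := by
  obtain ⟨l₁, B₁, hl₁, hB₁, rfl⟩ := starDecV_iff.1 hX
  obtain ⟨l₂, B₂, hl₂, hB₂, rfl⟩ := starDecV_iff.1 hY
  obtain ⟨L, B, rfl, rfl, hL, hB, rfl, rfl⟩ := exists_endsMixed_isFinalSegment hB₁ hB₂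
  refine starDecV_iff.2 ⟨L, B, h L hl₁ hl₂ hL, hB, ?_⟩
  rw [disjSum_eq_iff, toLeft_toFinset, toRight_toFinset]
  exact ⟨rfl, rfl⟩

theorem StarDecV.exists_isStarOrder_singleton_suffix {K : Finset (Finset V)} {v : V}
    (h : StarDecV K {v}) : ∃ L, IsStarOrder L K ∧ [v] <:+ L := by
  obtain ⟨L, B, hL, hB, hBv⟩ := starDecV_iff.1 h
  obtain rfl : B = [v] := List.perm_singleton.1 <|
    List.perm_of_nodup_nodup_toFinset_eq (hL.nodup.sublist hB.1.sublist) (List.nodup_singleton v)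
      (by simpa using hBv.symm)
  exact ⟨L, hL, hB.1⟩

theorem MergesAlongJoin.starDecV_singleton_inr (h : MergesAlongJoin X Y) {b : β}
    (hX : StarDecV X X₀) (hY : StarDecV Y {b}) : StarDecV (join X Y) {Sum.inr b} := by
  obtain ⟨l₁, -, hl₁, -, -⟩ := starDecV_iff.1 hX
  obtain ⟨l₂, hl₂, hb⟩ := hY.exists_isStarOrder_singleton_suffix
  obtain ⟨L, rfl, rfl, hL, hbL⟩ := exists_endsMixed_inr_suffix l₁ hb
  exact starDecV_iff.2 ⟨L, [Sum.inr b], h L hl₁ hl₂ hL, ⟨hbL, by simp⟩, by simp⟩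

theorem MergesAlongJoin.starDecV_singleton_inl (h : MergesAlongJoin X Y) {a : α}
    (hX : StarDecV X {a}) (hY : StarDecV Y Y₀) : StarDecV (join X Y) {Sum.inl a} := by
  obtain ⟨l₁, hl₁, ha⟩ := hX.exists_isStarOrder_singleton_suffix
  obtain ⟨l₂, -, hl₂, -, -⟩ := starDecV_iff.1 hY
  obtain ⟨L, rfl, rfl, hL, haL⟩ := exists_endsMixed_inl_suffix l₂ ha
  exact starDecV_iff.2 ⟨L, [Sum.inl a], h L hl₁ hl₂ hL, ⟨haL, by simp⟩, by simp⟩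

theorem MergesAlongJoin.starDecV_upperVerts (h : MergesAlongJoin X Y)
    (hX : StarDecV X (upperVerts X (lefts B))) (hY : StarDecV Y (upperVerts Y (rights B)))
    (hl : lefts B = [] → B = [] ∨ verts X = ∅ ∨ ∃ b ∈ verts Y, B = [Sum.inr b])
    (hr : rights B = [] → B = [] ∨ verts Y = ∅ ∨ ∃ a ∈ verts X, B = [Sum.inl a]) :
    StarDecV (join X Y) (upperVerts (join X Y) B) := by
  have hverts := verts_join hX.nonempty hY.nonempty
  by_cases hb : ∃ b ∈ verts Y, B = [Sum.inr b]
  · obtain ⟨b, hb, rfl⟩ := hb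
    have hYb : StarDecV Y {b} := by simpa [upperVerts, hb] using hY
    simpa [upperVerts, hverts, hb] using h.starDecV_singleton_inr hX hYb
  by_cases ha : ∃ a ∈ verts X, B = [Sum.inl a]
  · obtain ⟨a, ha, rfl⟩ := ha
    have hXa : StarDecV X {a} := by simpa [upperVerts, ha] using hX
    simpa [upperVerts, hverts, ha] using h.starDecV_singleton_inl hXa hY
  simp only [hb, ha, or_false] at hl hr
  rw [upperVerts_join hX.nonempty hY.nonempty hl hr]
  exact h.starDecV_disjSum hX hY

theorem MergesAlongJoin.link_inl {L : List (α ⊕ β)} {a : α} (h : MergesAlongJoin (lk {a} X) Y)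
    (hX : IsStarOrder (lefts L) X) (hY : IsStarOrder (rights L) Y) (hL : EndsMixed L)
    (haB : Sum.inl a :: B <:+ L) :
    StarDecV (lk {Sum.inl a} (join X Y)) (upperVerts (lk {Sum.inl a} (join X Y)) B) := by
  have hBL : B <:+ L := (List.suffix_cons _ B).trans haB
  rw [lk_join_inl]
  refine h.starDecV_upperVerts (hX.link a _ (lefts_suffix haB))
    (hY.starDecV_upperVerts (rights_suffix hBL)) (fun hB => ?_) (fun hB => ?_)
  · rcases hL.tail_of_lefts_eq_nil haB hB with hB | hl | ⟨-, b, rfl⟩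
    · exact .inl hB
    · exact absurd hl (List.ne_nil_of_mem (mem_lefts.2 (haB.subset List.mem_cons_self)))
    · exact .inr (.inr ⟨b, hY.mem_verts_iff.2 ((rights_suffix hBL).subset (by simp)), rfl⟩)
  · rcases hL.tail_of_rights_eq_nil haB hB with hB | hr | ⟨⟨b, hab⟩, -⟩
    · exact .inl hB
    · exact .inr (.inl (hY.verts_eq_empty_iff.2 hr))
    · exact absurd hab Sum.inl_ne_inr

theorem MergesAlongJoin.link_inr {L : List (α ⊕ β)} {b : β} (h : MergesAlongJoin X (lk {b} Y))
    (hX : IsStarOrder (lefts L) X) (hY : IsStarOrder (rights L) Y) (hL : EndsMixed L)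
    (hbB : Sum.inr b :: B <:+ L) :
    StarDecV (lk {Sum.inr b} (join X Y)) (upperVerts (lk {Sum.inr b} (join X Y)) B) := by
  have hBL : B <:+ L := (List.suffix_cons _ B).trans hbB
  rw [lk_join_inr]
  refine h.starDecV_upperVerts (hX.starDecV_upperVerts (lefts_suffix hBL))
    (hY.link b _ (rights_suffix hbB)) (fun hB => ?_) (fun hB => ?_)
  · rcases hL.tail_of_lefts_eq_nil hbB hB with hB | hl | ⟨⟨a, hba⟩, -⟩
    · exact .inl hB
    · exact .inr (.inl (hX.verts_eq_empty_iff.2 hl))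
    · exact absurd hba Sum.inr_ne_inl
  · rcases hL.tail_of_rights_eq_nil hbB hB with hB | hr | ⟨-, a, rfl⟩
    · exact .inl hB
    · exact absurd hr (List.ne_nil_of_mem (mem_rights.2 (hbB.subset List.mem_cons_self)))
    · exact .inr (.inr ⟨a, hX.mem_verts_iff.2 ((lefts_suffix hBL).subset (by simp)), rfl⟩)

theorem mergesAlongJoin (X : Finset (Finset α)) (Y : Finset (Finset β)) :
    MergesAlongJoin X Y := by
  intro L hX hY hL
  refine ⟨nodup_of_lefts_of_rights hX.nodup hY.nodup, ?_, ?_, ?_⟩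
  · rw [verts_join hX.nonempty hY.nonempty, eq_disjSum_iff, toLeft_toFinset, toRight_toFinset]
    exact ⟨hX.toFinset_eq, hY.toFinset_eq⟩
  · obtain ⟨c, hc⟩ := hX.pure
    obtain ⟨d, hd⟩ := hY.pure
    exact ⟨_, hc.join hd⟩
  · rintro (a | b) B hB
    · have : #(verts (lk {a} X)) < #(verts X) := card_verts_lk_lt <|
        hX.mem_verts_iff.2 (mem_lefts.2 (hB.subset List.mem_cons_self))
      exact (mergesAlongJoin (lk {a} X) Y).link_inl hX hY hL hB
    · have : #(verts (lk {b} Y)) < #(verts Y) := card_verts_lk_lt <|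
        hY.mem_verts_iff.2 (mem_rights.2 (hB.subset List.mem_cons_self))
      exact (mergesAlongJoin X (lk {b} Y)).link_inr hX hY hL hB
termination_by #(verts X) + #(verts Y)

end Merge

/-- Merging star decompositions in vertices along a join: if `sd X` and
`sd Y` are star decomposable in vertices, and `≺` (encoded by the list `L` on
`V(X) ⊔ V(Y)`) restricts to star decompositions in vertices of `(sd X, V(X))` and
`(sd Y, V(Y))`, and (when both are nonempty) the two largest elements of `≺` are the
largest element of `V(X)` and the largest element of `V(Y)`, then `≺` induces a star
decomposition of `(sd (X * Y), V(X) ⊔ V(Y))` in vertices; in particular `sd (X * Y)` is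
star decomposable in vertices. -/
theorem join_starDecV {α β : Type*} [DecidableEq α] [DecidableEq β]
    (X : Finset (Finset α)) (Y : Finset (Finset β)) (hX : IsCplx X) (hY : IsCplx Y)
    (hpX : ∃ dX : ℤ, PureDim X dX) (hpY : ∃ dY : ℤ, PureDim Y dY)
    (hsdX : StarDecV X (verts X)) (hsdY : StarDecV Y (verts Y))
    (L : List (α ⊕ β)) (hnd : L.Nodup)
    (hcov : L.toFinset = (verts X).image Sum.inl ∪ (verts Y).image Sum.inr)
    (hresX : InducesStarDecompV (L.filterMap fun z => z.getLeft?) X (verts X))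
    (hresY : InducesStarDecompV (L.filterMap fun z => z.getRight?) Y (verts Y))
    (hlast2 : (verts X).Nonempty → (verts Y).Nonempty →
      ∃ (M : List (α ⊕ β)) (a b : α ⊕ β), L = M ++ [a, b] ∧
        ((a.isLeft ∧ b.isRight) ∨ (a.isRight ∧ b.isLeft))) :
    InducesStarDecompV L (join X Y) (verts (join X Y)) ∧
      StarDecV (join X Y) (verts (join X Y)) := by
  have hXL : IsStarOrder (lefts L) X := isStarOrder_iff_inducesStarDecompV.2 ⟨hpX, hresX⟩
  have hYL : IsStarOrder (rights L) Y := isStarOrder_iff_inducesStarDecompV.2 ⟨hpY, hresY⟩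
  have hL : EndsMixed L := by
    intro hl hr
    obtain ⟨M, a, b, hM, hab⟩ := hlast2
      (nonempty_iff_ne_empty.2 (mt hXL.verts_eq_empty_iff.1 hl))
      (nonempty_iff_ne_empty.2 (mt hYL.verts_eq_empty_iff.1 hr))
    refine ⟨[a, b], hM ▸ List.suffix_append M [a, b], rfl, ?_⟩
    cases a <;> cases b <;> simp_all
  have hjoin : IsStarOrder L (join X Y) := mergesAlongJoin X Y L hXL hYL hL
  exact ⟨(isStarOrder_iff_inducesStarDecompV.1 hjoin).2,
    hjoin.starDecV_upperVerts List.nil_suffix⟩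

end Paper
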